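/- Let τ > 0 be real, let q = e^{−π²/τ}, and let y = (η_1, …, η_n) ∈ ℝ^n with |η_i| ≤ 1/2 for all i. Then Σ_{x ∈ ℤ^n} e^{−τ‖x − y‖²} / Σ_{x ∈ ℤ^n} e^{−τ‖x‖²} = ∏_{i=1}^n ∏_{k=1}^∞ (1 − 2 q^{2k−1}(1 − cos(2π η_i))/(1 + q^{2k−1})²). -/

import Mathlib

open Filter Topology

/-- The reciprocal `1 / ((1 - p) ⋯ (1 - p ^ m))` of the `q`-factorial, extended by `0` to
negative `m`. -/
noncomputable def invQFactorial (p : ℝ) (m : ℤ) : ℝ :=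
  if 0 ≤ m then (∏ k ∈ Finset.range m.toNat, (1 - p ^ (k + 1)))⁻¹ else 0

lemma one_sub_pow_succ_pos {p : ℝ} (hp0 : 0 < p) (hp1 : p < 1) (k : ℕ) : 0 < 1 - p ^ (k + 1) :=
  sub_pos.2 (pow_lt_one₀ hp0.le hp1 k.succ_ne_zero)

lemma invQFactorial_nonneg {p : ℝ} (hp0 : 0 < p) (hp1 : p < 1) (m : ℤ) :
    0 ≤ invQFactorial p m := by
  unfold invQFactorial
  split_ifs
  · exact inv_nonneg.2 (Finset.prod_nonneg fun k _ ↦ (one_sub_pow_succ_pos hp0 hp1 k).le)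
  · exact le_rfl

lemma invQFactorial_natCast (p : ℝ) (m : ℕ) :
    invQFactorial p m = (∏ k ∈ Finset.range m, (1 - p ^ (k + 1)))⁻¹ := by
  simp [invQFactorial]

lemma invQFactorial_sub_one {p : ℝ} (hp0 : 0 < p) (hp1 : p < 1) (m : ℤ) :
    invQFactorial p (m - 1) = (1 - p ^ m) * invQFactorial p m := by
  rcases lt_trichotomy m 0 with h | rfl | h
  · simp [invQFactorial, show ¬ 0 ≤ m by lia, show ¬ 1 ≤ m by lia]
  · simp [invQFactorial]
  · obtain ⟨k, rfl⟩ : ∃ k : ℕ, m = k + 1 := ⟨(m - 1).toNat, by lia⟩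
    have hk := (one_sub_pow_succ_pos hp0 hp1 k).ne'
    have e : (p ^ ((k : ℤ) + 1) : ℝ) = p ^ (k + 1) := by norm_cast
    rw [add_sub_cancel_right, ← Nat.cast_succ, invQFactorial_natCast, invQFactorial_natCast,
      Nat.cast_succ, e, Finset.prod_range_succ, mul_inv]
    field_simp

lemma summable_neg_pow_succ {p : ℝ} (hp0 : 0 < p) (hp1 : p < 1) :
    Summable fun k : ℕ ↦ ‖-p ^ (k + 1)‖ := by
  simpa [abs_of_pos hp0, Function.comp_def] using
    (summable_geometric_of_lt_one hp0.le hp1).comp_injective (add_left_injective 1)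

lemma exists_tendsto_invQFactorial {p : ℝ} (hp0 : 0 < p) (hp1 : p < 1) :
    ∃ L : ℝ, 0 < L ∧ Tendsto (invQFactorial p) atTop (𝓝 L) ∧ ∀ m, invQFactorial p m ≤ L := by
  have hs := summable_neg_pow_succ hp0 hp1
  have hne : ∏' k : ℕ, (1 + -p ^ (k + 1)) ≠ 0 :=
    tprod_one_add_ne_zero_of_summable
      (fun k ↦ by simpa [← sub_eq_add_neg] using (one_sub_pow_succ_pos hp0 hp1 k).ne') hs
  have ht := (multipliable_one_add_of_summable hs).tendsto_prod_tprod_nat.inv₀ hne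
  set L := (∏' k : ℕ, (1 + -p ^ (k + 1)))⁻¹
  have htn : Tendsto (fun m : ℕ ↦ invQFactorial p m) atTop (𝓝 L) := by
    simpa only [invQFactorial_natCast, sub_eq_add_neg] using ht
  have hmono : Monotone fun m : ℕ ↦ invQFactorial p m := by
    refine monotone_nat_of_le_succ fun m ↦ ?_
    have h := invQFactorial_sub_one hp0 hp1 (m + 1 : ℕ)
    rw [Nat.cast_succ, add_sub_cancel_right] at h
    rw [Nat.cast_succ, h]
    refine mul_le_of_le_one_left (invQFactorial_nonneg hp0 hp1 _) ?_
    linarith [zpow_pos hp0 ((m : ℤ) + 1)]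
  have hle : ∀ m : ℕ, invQFactorial p m ≤ L := hmono.ge_of_tendsto htn
  have hL : 0 < L := lt_of_lt_of_le (by simp [invQFactorial]) (hle 0)
  refine ⟨L, hL, ?_, fun m ↦ ?_⟩
  · have htoNat : Tendsto Int.toNat atTop atTop :=
      tendsto_atTop.2 fun b ↦ (eventually_ge_atTop (b : ℤ)).mono fun m hm ↦ by lia
    refine (htn.comp htoNat).congr' ((eventually_ge_atTop 0).mono fun m hm ↦ ?_)
    simp [Int.toNat_of_nonneg hm]
  · by_cases hm : 0 ≤ m
    · lift m to ℕ using hm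
      exact hle m
    · simpa [invQFactorial, hm] using hL.le

/-- The coefficient of `z ^ n` in `∏_{k < N} (1 + q ^ (2k+1) z) (1 + q ^ (2k+1) / z)`, up to a
factor independent of `n`. -/
noncomputable def finiteThetaCoeff (q : ℝ) (N : ℕ) (n : ℤ) : ℝ :=
  invQFactorial (q ^ 2) (N - n) * invQFactorial (q ^ 2) (N + n) * q ^ n ^ 2

lemma finiteThetaCoeff_eq_zero {q : ℝ} {N : ℕ} {n : ℤ} (h : n ∉ Finset.Icc (-N : ℤ) N) :
    finiteThetaCoeff q N n = 0 := by
  rw [Finset.mem_Icc, not_and_or] at h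
  rcases h with h | h
  · simp [finiteThetaCoeff, invQFactorial, show ¬ 0 ≤ (N : ℤ) + n by lia]
  · simp [finiteThetaCoeff, invQFactorial, show ¬ n ≤ (N : ℤ) by lia]

lemma summable_finiteThetaCoeff_mul (q : ℝ) (N : ℕ) (g : ℤ → ℝ) :
    Summable fun n ↦ finiteThetaCoeff q N n * g n :=
  summable_of_ne_finset_zero (s := Finset.Icc (-N : ℤ) N) fun n hn ↦ by
    rw [finiteThetaCoeff_eq_zero hn, zero_mul]

lemma finiteThetaCoeff_succ {q : ℝ} (hq0 : 0 < q) (hq1 : q < 1) (N : ℕ) (n : ℤ) :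
    (1 - (q ^ 2) ^ (2 * N + 1 : ℤ)) * (1 - (q ^ 2) ^ (2 * N + 2 : ℤ)) *
        finiteThetaCoeff q (N + 1) n =
      (1 + (q ^ (2 * N + 1)) ^ 2) * finiteThetaCoeff q N n +
        q ^ (2 * N + 1) * (finiteThetaCoeff q N (n - 1) + finiteThetaCoeff q N (n + 1)) := by
  have hp0 : 0 < q ^ 2 := by positivity
  have hp1 : q ^ 2 < 1 := pow_lt_one₀ hq0.le hq1 two_ne_zero
  have hA := invQFactorial_sub_one hp0 hp1 (N + 1 - n)
  have hA' := invQFactorial_sub_one hp0 hp1 (N - n)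
  have hB := invQFactorial_sub_one hp0 hp1 (N + 1 + n)
  have hB' := invQFactorial_sub_one hp0 hp1 (N + n)
  rw [show (N + 1 - n - 1 : ℤ) = N - n by ring] at hA
  rw [show (N + 1 + n - 1 : ℤ) = N + n by ring] at hB
  have hq : q ≠ 0 := hq0.ne'
  have e1 : (q ^ 2) ^ (N - n : ℤ) = q ^ (2 * N : ℤ) / q ^ (2 * n) := by
    rw [← zpow_natCast q 2, ← zpow_mul, ← zpow_sub₀ hq]; push_cast; ring_nf
  have e2 : (q ^ 2) ^ (N + n : ℤ) = q ^ (2 * N : ℤ) * q ^ (2 * n) := by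
    rw [← zpow_natCast q 2, ← zpow_mul, ← zpow_add₀ hq]; push_cast; ring_nf
  have e3 : (q ^ 2) ^ (N + 1 - n : ℤ) = q ^ 2 * (q ^ (2 * N : ℤ) / q ^ (2 * n)) := by
    rw [← e1, ← zpow_one_add₀ hp0.ne']; ring_nf
  have e4 : (q ^ 2) ^ (N + 1 + n : ℤ) = q ^ 2 * (q ^ (2 * N : ℤ) * q ^ (2 * n)) := by
    rw [← e2, ← zpow_one_add₀ hp0.ne']; ring_nf
  have e5 : (q ^ 2) ^ (2 * N + 1 : ℤ) = q ^ 2 * (q ^ (2 * N : ℤ)) ^ 2 := by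
    rw [add_comm, zpow_one_add₀ hp0.ne', ← zpow_natCast q 2, ← zpow_natCast _ 2, ← zpow_mul,
      ← zpow_mul]
    push_cast; ring_nf
  have e6 : (q ^ 2) ^ (2 * N + 2 : ℤ) = q ^ 4 * (q ^ (2 * N : ℤ)) ^ 2 := by
    rw [show (2 * N + 2 : ℤ) = 1 + (2 * N + 1) by ring, zpow_one_add₀ hp0.ne', e5]; ring
  have e7 : q ^ (2 * N + 1) = q * q ^ (2 * N : ℤ) := by
    rw [pow_succ']; norm_cast
  have e8 : q ^ (n - 1) ^ 2 = q ^ n ^ 2 * q / q ^ (2 * n) := by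
    rw [← zpow_add_one₀ hq, ← zpow_sub₀ hq]; ring_nf
  have e9 : q ^ (n + 1) ^ 2 = q ^ n ^ 2 * q * q ^ (2 * n) := by
    rw [← zpow_add_one₀ hq, ← zpow_add₀ hq]; ring_nf
  have hz : q ^ (2 * n) ≠ 0 := zpow_ne_zero _ hq
  simp only [finiteThetaCoeff]
  rw [show (N - (n - 1) : ℤ) = N + 1 - n by ring, show (N - (n + 1) : ℤ) = N - n - 1 by ring,
    show (N + (n - 1) : ℤ) = N + n - 1 by ring, show (N + (n + 1) : ℤ) = N + 1 + n by ring,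
    hA', hB', hA, hB, e1, e2, e3, e4, e5, e6, e7, e8, e9]
  push_cast
  field_simp
  ring

/-- Finite form of the Jacobi triple product identity. -/
lemma hasSum_finiteThetaCoeff_mul_cos {q : ℝ} (hq0 : 0 < q) (hq1 : q < 1) (θ : ℝ) (N : ℕ) :
    HasSum (fun n : ℤ ↦ finiteThetaCoeff q N n * Real.cos (n * θ))
      (invQFactorial (q ^ 2) (2 * N) *
        ∏ k ∈ Finset.range N, (1 + 2 * q ^ (2 * k + 1) * Real.cos θ + (q ^ (2 * k + 1)) ^ 2)) := by
  have hp0 : 0 < q ^ 2 := by positivity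
  have hp1 : q ^ 2 < 1 := pow_lt_one₀ hq0.le hq1 two_ne_zero
  induction N with
  | zero =>
    convert hasSum_single (0 : ℤ) fun n hn ↦ ?_ using 1
    · simp [finiteThetaCoeff, invQFactorial]
    · rw [finiteThetaCoeff_eq_zero (by simpa using hn), zero_mul]
  | succ N ih =>
    obtain ⟨A, hA⟩ := summable_finiteThetaCoeff_mul q N fun n ↦ Real.cos ((n + 1) * θ)
    obtain ⟨B, hB⟩ := summable_finiteThetaCoeff_mul q N fun n ↦ Real.cos ((n - 1) * θ)
    have hAB := (hA.add hB).unique ((ih.mul_left (2 * Real.cos θ)).congr_fun fun n ↦ by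
      rw [add_mul, sub_mul, one_mul, Real.cos_add, Real.cos_sub]; ring)
    have hA' := (Equiv.subRight (1 : ℤ)).hasSum_iff.2 hA
    have hB' := (Equiv.addRight (1 : ℤ)).hasSum_iff.2 hB
    have hD0 : (1 - (q ^ 2) ^ (2 * N + 1 : ℤ)) * (1 - (q ^ 2) ^ (2 * N + 2 : ℤ)) ≠ 0 := by
      refine (mul_pos (sub_pos.2 ?_) (sub_pos.2 ?_)).ne' <;>
        exact zpow_lt_one₀ hp0 hp1 (by lia)
    refine (hasSum_mul_left_iff hD0).1 ?_
    have h1 := invQFactorial_sub_one hp0 hp1 (2 * N + 1)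
    have h2 := invQFactorial_sub_one hp0 hp1 (2 * N + 2)
    rw [show (2 * N + 1 - 1 : ℤ) = 2 * N by ring] at h1
    rw [show (2 * N + 2 - 1 : ℤ) = 2 * N + 1 by ring] at h2
    have key := (ih.mul_left (1 + (q ^ (2 * N + 1)) ^ 2)).add
      ((hA'.add hB').mul_left (q ^ (2 * N + 1)))
    have hval : (1 - (q ^ 2) ^ (2 * N + 1 : ℤ)) * (1 - (q ^ 2) ^ (2 * N + 2 : ℤ)) *
        invQFactorial (q ^ 2) (2 * (N + 1 : ℕ)) = invQFactorial (q ^ 2) (2 * N) := by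
      rw [h1, h2, Nat.cast_succ, mul_add_one, mul_assoc]
    refine Eq.subst (motive := HasSum _) ?_ (key.congr_fun fun n ↦ ?_)
    · rw [hAB, ← hval, Finset.prod_range_succ]
      ring
    · rw [← mul_assoc, finiteThetaCoeff_succ hq0 hq1]
      simp
      ring

lemma summable_zpow_sq {q : ℝ} (hq0 : 0 < q) (hq1 : q < 1) : Summable fun n : ℤ ↦ q ^ n ^ 2 := by
  have ht : 0 < -Real.log q / Real.pi :=
    div_pos (neg_pos.2 (Real.log_neg hq0 hq1)) Real.pi_pos
  refine (HurwitzZeta.hasSum_int_evenKernel 0 ht).summable.congr fun n ↦ ?_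
  rw [← Real.rpow_intCast, Real.rpow_def_of_pos hq0]
  congr 1
  push_cast
  field_simp
  ring

lemma multipliable_theta_factor {q : ℝ} (hq0 : 0 < q) (hq1 : q < 1) (θ : ℝ) :
    Multipliable fun k : ℕ ↦ 1 + 2 * q ^ (2 * k + 1) * Real.cos θ + (q ^ (2 * k + 1)) ^ 2 := by
  simp_rw [add_assoc]
  refine multipliable_one_add_of_summable ?_
  have hs : Summable fun k : ℕ ↦ q ^ (2 * k + 1) :=
    (summable_geometric_of_lt_one hq0.le hq1).comp_injective
      (i := fun k : ℕ ↦ 2 * k + 1) fun a b h ↦ by simpa using h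
  refine (hs.mul_left 3).of_nonneg_of_le (fun k ↦ norm_nonneg _) fun k ↦ ?_
  have h0 : 0 < q ^ (2 * k + 1) := by positivity
  have h1 : q ^ (2 * k + 1) < 1 := pow_lt_one₀ hq0.le hq1 (by simp)
  have hc := Real.cos_le_one θ
  have hc' := Real.neg_one_le_cos θ
  rw [Real.norm_eq_abs, abs_le]
  constructor <;> nlinarith

/-- The Jacobi triple product identity, up to a factor independent of `θ`. -/
lemma exists_tprod_eq_mul_tsum_cos {q : ℝ} (hq0 : 0 < q) (hq1 : q < 1) :
    ∃ C : ℝ, 0 < C ∧ ∀ θ : ℝ,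
      ∏' k : ℕ, (1 + 2 * q ^ (2 * k + 1) * Real.cos θ + (q ^ (2 * k + 1)) ^ 2) =
        C * ∑' n : ℤ, q ^ n ^ 2 * Real.cos (n * θ) := by
  have hp0 : 0 < q ^ 2 := by positivity
  have hp1 : q ^ 2 < 1 := pow_lt_one₀ hq0.le hq1 two_ne_zero
  obtain ⟨L, hL, hlim, hle⟩ := exists_tendsto_invQFactorial hp0 hp1
  refine ⟨L, hL, fun θ ↦ ?_⟩
  have hN : Tendsto (fun N : ℕ ↦ (N : ℤ)) atTop atTop := tendsto_natCast_atTop_atTop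
  have hprod := (hlim.comp (hN.const_mul_atTop' two_pos)).mul
    (multipliable_theta_factor hq0 hq1 θ).tendsto_prod_tprod_nat
  have hsum : Tendsto (fun N : ℕ ↦ ∑' n : ℤ, finiteThetaCoeff q N n * Real.cos (n * θ)) atTop
      (𝓝 (∑' n : ℤ, L * L * q ^ n ^ 2 * Real.cos (n * θ))) := by
    refine tendsto_tsum_of_dominated_convergence ((summable_zpow_sq hq0 hq1).mul_left (L * L))
      (fun n ↦ ?_) (Eventually.of_forall fun N n ↦ ?_)
    · refine Tendsto.mul_const _ (Tendsto.mul_const _ (Tendsto.mul ?_ ?_))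
      · exact hlim.comp (tendsto_atTop_add_const_right _ (-n) hN)
      · exact hlim.comp (tendsto_atTop_add_const_right _ n hN)
    · have h1 := invQFactorial_nonneg hp0 hp1 (N - n)
      have h2 := invQFactorial_nonneg hp0 hp1 (N + n)
      have h3 : 0 ≤ q ^ n ^ 2 := (zpow_pos hq0 _).le
      rw [norm_mul, Real.norm_eq_abs, Real.norm_eq_abs, finiteThetaCoeff,
        abs_of_nonneg (by positivity)]
      refine (mul_le_of_le_one_right (by positivity) (Real.abs_cos_le_one _)).trans ?_
      gcongr
      · exact hle _
      · exact hle _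
  simp_rw [(hasSum_finiteThetaCoeff_mul_cos hq0 hq1 θ _).tsum_eq, mul_assoc, tsum_mul_left]
    at hsum
  refine mul_left_cancel₀ hL.ne' ((tendsto_nhds_unique hprod ?_))
  simpa only [mul_assoc, Function.comp_apply] using hsum

lemma tprod_eq_tsum_cos_div {q : ℝ} (hq0 : 0 < q) (hq1 : q < 1) (θ : ℝ) :
    ∏' k : ℕ, (1 - 2 * q ^ (2 * k + 1) * (1 - Real.cos θ) / (1 + q ^ (2 * k + 1)) ^ 2) =
      (∑' n : ℤ, q ^ n ^ 2 * Real.cos (n * θ)) / ∑' n : ℤ, q ^ n ^ 2 := by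
  obtain ⟨C, hC, h⟩ := exists_tprod_eq_mul_tsum_cos hq0 hq1
  have h0 := h 0
  simp only [mul_zero, Real.cos_zero, mul_one] at h0
  have hpos : 0 < ∑' n : ℤ, q ^ n ^ 2 :=
    (summable_zpow_sq hq0 hq1).tsum_pos (fun n ↦ (zpow_pos hq0 _).le) 0 (by simp)
  have hm0 := multipliable_theta_factor hq0 hq1 0
  simp only [Real.cos_zero, mul_one] at hm0
  rw [← mul_div_mul_left _ _ hC.ne', ← h, ← h0,
    ← (multipliable_theta_factor hq0 hq1 θ).tprod_div₀ hm0 (h0 ▸ (mul_pos hC hpos).ne')]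
  refine tprod_congr fun k ↦ ?_
  have hk : 0 < q ^ (2 * k + 1) := by positivity
  rw [show 1 + 2 * q ^ (2 * k + 1) + (q ^ (2 * k + 1)) ^ 2 = (1 + q ^ (2 * k + 1)) ^ 2 by ring]
  field_simp
  ring

/-- Poisson summation for a shifted Gaussian. -/
lemma hasSum_exp_neg_mul_sub_sq {τ : ℝ} (hτ : 0 < τ) (η : ℝ) :
    HasSum (fun n : ℤ ↦ Real.exp (-τ * ((n : ℝ) - η) ^ 2))
      (√(Real.pi / τ) * ∑' n : ℤ, Real.exp (-Real.pi ^ 2 / τ) ^ n ^ 2 *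
        Real.cos (n * (2 * Real.pi * η))) := by
  have hπ := Real.pi_pos
  have ht : 0 < τ / Real.pi := by positivity
  have h1 := HurwitzZeta.hasSum_int_evenKernel (-η) ht
  have h2 := Complex.hasSum_re (HurwitzZeta.hasSum_int_cosKernel (-η) (one_div_pos.2 ht))
  rw [HurwitzZeta.evenKernel_functional_equation, ← Complex.ofReal_re (HurwitzZeta.cosKernel _ _),
    ← h2.tsum_eq] at h1
  convert h1.congr_fun fun n ↦ ?_ using 1
  · congr 1
    · rw [← Real.sqrt_eq_rpow, ← Real.sqrt_one, ← Real.sqrt_div zero_le_one, one_div_div]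
    · refine tsum_congr fun n ↦ ?_
      rw [Complex.re_mul_ofReal, show (2 * Real.pi * Complex.I * (-η : ℝ) * n : ℂ) =
        ((-(n * (2 * Real.pi * η)) : ℝ) : ℂ) * Complex.I by push_cast; ring,
        Complex.exp_ofReal_mul_I_re, Real.cos_neg, mul_comm, ← Real.rpow_intCast,
        ← Real.exp_mul]
      congr 2
      push_cast
      field_simp
  · congr 1
    field_simp
    ring

lemma hasSum_pi_prod {α : Type*} {n : ℕ} {f : Fin n → α → ℝ} {s : Fin n → ℝ}
    (hf : ∀ i a, 0 ≤ f i a) (hs : ∀ i, HasSum (f i) (s i)) :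
    HasSum (fun x : Fin n → α ↦ ∏ i, f i (x i)) (∏ i, s i) := by
  induction n with
  | zero => simp
  | succ n ih =>
    have h := ih (fun i a ↦ hf i.succ a) fun i ↦ hs i.succ
    have hnonneg : 0 ≤ fun x : Fin n → α ↦ ∏ i, f i.succ (x i) :=
      fun x ↦ Finset.prod_nonneg fun i _ ↦ hf _ _
    have hsummable := (hs 0).summable.mul_of_nonneg h.summable (hf 0) hnonneg
    have hmul := (hs 0).mul h hsummable
    rw [← (Fin.consEquiv fun _ ↦ α).hasSum_iff, Fin.prod_univ_succ]
    simpa [Function.comp_def, Fin.prod_univ_succ, Fin.consEquiv] using hmul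

/-- Let `τ > 0`, `q = e^{−π²/τ}`, and `y = (η_1, …, η_n) ∈ ℝⁿ` with `|η_i| ≤ 1/2` for all
`i`. Then
`Σ_{x ∈ ℤⁿ} e^{−τ‖x−y‖²} / Σ_{x ∈ ℤⁿ} e^{−τ‖x‖²}
  = ∏_{i=1}^n ∏_{k=1}^∞ (1 − 2q^{2k−1}(1 − cos(2πη_i))/(1 + q^{2k−1})²)`.
(The inner product is indexed below by `k : ℕ`, with `k` corresponding to `k+1` in the
statement, so the exponent `2k−1` becomes `2k+1`.) -/
theorem stmt_10 (n : ℕ) (τ : ℝ) (hτ : 0 < τ) (q : ℝ) (hq : q = Real.exp (-Real.pi ^ 2 / τ))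
    (y : Fin n → ℝ) (hy : ∀ i, |y i| ≤ 1 / 2) :
    (∑' x : Fin n → ℤ, Real.exp (-τ * ∑ i, ((x i : ℝ) - y i) ^ 2)) /
        (∑' x : Fin n → ℤ, Real.exp (-τ * ∑ i, (x i : ℝ) ^ 2)) =
      ∏ i, ∏' k : ℕ,
        (1 - 2 * q ^ (2 * k + 1) * (1 - Real.cos (2 * Real.pi * y i)) /
          (1 + q ^ (2 * k + 1)) ^ 2) := by
  subst hq
  have hq0 := Real.exp_pos (-Real.pi ^ 2 / τ)
  have hq1 : Real.exp (-Real.pi ^ 2 / τ) < 1 := by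
    rw [← Real.exp_zero, Real.exp_lt_exp]
    exact div_neg_of_neg_of_pos (neg_lt_zero.2 (by positivity)) hτ
  have key (z : Fin n → ℝ) := (hasSum_pi_prod (fun i a ↦ (Real.exp_pos _).le)
    fun i ↦ hasSum_exp_neg_mul_sub_sq hτ (z i)).tsum_eq
  simp only [← Real.exp_sum, ← Finset.mul_sum] at key
  have key0 := key 0
  simp only [Pi.zero_apply, sub_zero, mul_zero, Real.cos_zero, mul_one] at key0
  rw [key, key0, ← Finset.prod_div_distrib]
  refine Finset.prod_congr rfl fun i _ ↦ ?_
  rw [tprod_eq_tsum_cos_div hq0 hq1, mul_div_mul_left _ _ (by positivity)]
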